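/- Let s > 1 be real and for integers k ≥ 1 define α(s,k) = ((ζ(k+s)−1)·(ψ(k+s)−ψ(s)) + ζ'(k+s))/k. Then for every integer k with k ≥ s+1 and k ≥ 3 one has |α(s,k)| < 1.64/2^{k+s}. -/

import Mathlib

/-!
Put `u = k + s > 4`. By the functional equation, `ψ(k+s) - ψ(s) = ∑_{j<k} 1/(s+j)`, which lies in
`[0, k]` since `s > 1` (`digamma_sub_bounds`). Hence `k α(s,k) = A - B`, where both
`A = (ζ(u)-1)(ψ(k+s)-ψ(s))` and `B = -ζ'(u) = ∑_{n≥2} (log n) n^{-u}` are nonnegative, and it is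
enough to bound each of them by `1.64 k 2^{-u}`.

Since `u ≥ 4`, we have `n^{-u} ≤ 2^{-u} (2/n)^4` for `n ≥ 2`. Therefore
`ζ(u) - 1 ≤ 2^{-u} · 16 (π⁴/90 - 1)`, with constant below `1.64`. Using moreover
`log n ≤ n - 1 ≤ n²/4`, we get `B ≤ 2^{-u} · 4 (π²/6 - 1)`, with constant below
`4.92 ≤ 1.64 k`.
-/

/-- The Riemann zeta-function for real argument `x > 1`, as the series `∑_{n≥1} n^{-x}`. -/
noncomputable def rzeta (x : ℝ) : ℝ := ∑' n : ℕ, ((n : ℝ) + 1) ^ (-x)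

/-- The digamma function `ψ(x) = Γ'(x) / Γ(x)`. -/
noncomputable def digamma (x : ℝ) : ℝ := deriv Real.Gamma x / Real.Gamma x

/-- The coefficients `α(s,k) = ((ζ(k+s)-1)(ψ(k+s)-ψ(s)) + ζ'(k+s))/k`. -/
noncomputable def alphaCoeff (s : ℝ) (k : ℕ) : ℝ :=
  ((rzeta ((k : ℝ) + s) - 1) * (digamma ((k : ℝ) + s) - digamma s) +
    deriv rzeta ((k : ℝ) + s)) / (k : ℝ)

lemma digamma_add_one {x : ℝ} (hx : 0 < x) : digamma (x + 1) = digamma x + 1 / x := by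
  have hd : DifferentiableAt ℝ Real.Gamma x :=
    Real.differentiableAt_Gamma fun m => by
      have : (0 : ℝ) ≤ m := m.cast_nonneg
      linarith
  have hG : Real.Gamma x ≠ 0 := (Real.Gamma_pos_of_pos hx).ne'
  -- Differentiate `Γ(y + 1) = y Γ(y)`, valid near `x`.
  have h1 : deriv Real.Gamma (x + 1) = Real.Gamma x + x * deriv Real.Gamma x := by
    rw [← deriv_comp_add_const Real.Gamma 1 x]
    have he : (fun y => Real.Gamma (y + 1)) =ᶠ[nhds x] fun y => y * Real.Gamma y := by
      filter_upwards [lt_mem_nhds hx] with y hy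
      exact Real.Gamma_add_one hy.ne'
    rw [he.deriv_eq]
    simpa using ((hasDerivAt_id' x).fun_mul hd.hasDerivAt).deriv
  unfold digamma
  rw [h1, Real.Gamma_add_one hx.ne']
  field_simp
  ring

lemma digamma_sub_bounds {s : ℝ} (hs : 1 < s) (k : ℕ) :
    0 ≤ digamma (k + s) - digamma s ∧ digamma (k + s) - digamma s ≤ k := by
  induction k with
  | zero => simp
  | succ k ih =>
    have hk : (0 : ℝ) ≤ k := k.cast_nonneg
    have hpos : 0 < (k : ℝ) + s := by linarith
    have h : digamma (((k + 1 : ℕ) : ℝ) + s) = digamma (k + s) + 1 / (k + s) := by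
      rw [← digamma_add_one hpos]
      push_cast
      ring_nf
    have h0 : 0 ≤ 1 / ((k : ℝ) + s) := by positivity
    have h1 : 1 / ((k : ℝ) + s) ≤ 1 := by
      rw [div_le_one hpos]
      linarith
    rw [h]
    push_cast
    constructor <;> linarith [ih.1, ih.2]

lemma rpow_neg_le {u : ℝ} (hu : 4 ≤ u) (n : ℕ) :
    ((n : ℝ) + 2) ^ (-u) ≤ (2 : ℝ) ^ (-u) * (16 / ((n : ℝ) + 2) ^ 4) := by
  have hn : (0 : ℝ) ≤ n := n.cast_nonneg
  have hm : (0 : ℝ) < (n : ℝ) + 2 := by linarith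
  have h : ((n : ℝ) + 2) ^ (-(u - 4)) ≤ (2 : ℝ) ^ (-(u - 4)) :=
    Real.rpow_le_rpow_of_nonpos (by norm_num) (by linarith) (by linarith)
  have e : ∀ x : ℝ, 0 < x → x ^ (-(u - 4)) = x ^ (-u) * x ^ 4 := fun x hx => by
    rw [← Real.rpow_natCast x 4, ← Real.rpow_add hx]
    congr 1
    push_cast
    ring
  rw [e _ hm, e _ two_pos] at h
  rw [← mul_div_assoc, le_div_iff₀ (by positivity)]
  calc _ ≤ _ := h
    _ = _ := by norm_num

lemma log_le_sq (n : ℕ) : Real.log ((n : ℝ) + 2) ≤ ((n : ℝ) + 2) ^ 2 / 4 := by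
  have hn : (0 : ℝ) ≤ n := n.cast_nonneg
  have := Real.log_le_sub_one_of_pos (x := (n : ℝ) + 2) (by linarith)
  nlinarith [sq_nonneg (n : ℝ)]

lemma hasSum_four : HasSum (fun n : ℕ => 1 / ((n : ℝ) + 2) ^ 4) (Real.pi ^ 4 / 90 - 1) := by
  have h := (hasSum_nat_add_iff' 2).mpr hasSum_zeta_four
  simpa [Finset.sum_range_succ] using h

lemma hasSum_two : HasSum (fun n : ℕ => 1 / ((n : ℝ) + 2) ^ 2) (Real.pi ^ 2 / 6 - 1) := by
  have h := (hasSum_nat_add_iff' 2).mpr hasSum_zeta_two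
  simpa [Finset.sum_range_succ] using h

lemma summable_rzeta {u : ℝ} (hu : 1 < u) :
    Summable fun n : ℕ => ((n : ℝ) + 1) ^ (-u) := by
  have h := (summable_nat_add_iff 1).mpr (Real.summable_nat_rpow.mpr (neg_lt_neg hu))
  simpa using h

lemma rzeta_sub_one_bounds {u : ℝ} (hu : 4 ≤ u) :
    0 ≤ rzeta u - 1 ∧ rzeta u - 1 ≤ (2 : ℝ) ^ (-u) * (16 * (Real.pi ^ 4 / 90 - 1)) := by
  have hsum := summable_rzeta (u := u) (by linarith)
  have e : rzeta u - 1 = ∑' n : ℕ, ((n : ℝ) + 2) ^ (-u) := by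
    unfold rzeta
    rw [hsum.tsum_eq_zero_add]
    have : ∀ n : ℕ, (n : ℝ) + 1 + 1 = n + 2 := fun n => by ring
    simp [this]
  have hb : HasSum (fun n : ℕ => (2 : ℝ) ^ (-u) * (16 / ((n : ℝ) + 2) ^ 4))
      ((2 : ℝ) ^ (-u) * (16 * (Real.pi ^ 4 / 90 - 1))) := by
    simpa [div_eq_mul_inv] using (hasSum_four.mul_left 16).mul_left ((2 : ℝ) ^ (-u))
  have h0 : ∀ n : ℕ, 0 ≤ ((n : ℝ) + 2) ^ (-u) := fun n => by positivity
  rw [e]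
  refine ⟨tsum_nonneg h0, ?_⟩
  rw [← hb.tsum_eq]
  exact (hb.summable.of_nonneg_of_le h0 (rpow_neg_le hu)).tsum_le_tsum (rpow_neg_le hu) hb.summable

/-- Termwise differentiation of the zeta series; on `x > 3` the differentiated terms are dominated
by `n ^ (-2)`. -/
lemma hasDerivAt_rzeta {u : ℝ} (hu : 3 < u) :
    HasDerivAt rzeta (∑' n : ℕ, -(Real.log ((n : ℝ) + 1) * ((n : ℝ) + 1) ^ (-u))) u := by
  refine hasDerivAt_tsum_of_isPreconnected (t := Set.Ioi 3) (y₀ := u)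
    (summable_rzeta (u := 2) (by norm_num)) isOpen_Ioi isPreconnected_Ioi
    (g := fun (n : ℕ) (x : ℝ) => ((n : ℝ) + 1) ^ (-x))
    (g' := fun (n : ℕ) (x : ℝ) => -(Real.log ((n : ℝ) + 1) * ((n : ℝ) + 1) ^ (-x)))
    ?_ ?_ hu (summable_rzeta (by linarith)) hu
  · intro n y _
    have hm : (0 : ℝ) < (n : ℝ) + 1 := by positivity
    exact ((hasDerivAt_neg y).const_rpow hm).congr_deriv (by ring)
  · intro n y hy
    have hn : (0 : ℝ) ≤ n := n.cast_nonneg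
    have hm : (0 : ℝ) < (n : ℝ) + 1 := by positivity
    have hy' : (3 : ℝ) < y := hy
    have hl : 0 ≤ Real.log ((n : ℝ) + 1) := Real.log_nonneg (by linarith)
    have hl' : Real.log ((n : ℝ) + 1) ≤ (n : ℝ) + 1 := by
      linarith [Real.log_le_sub_one_of_pos hm]
    rw [norm_neg, Real.norm_of_nonneg (by positivity)]
    calc Real.log ((n : ℝ) + 1) * ((n : ℝ) + 1) ^ (-y)
        ≤ ((n : ℝ) + 1) * ((n : ℝ) + 1) ^ (-3 : ℝ) := by
          gcongr
          linarith
      _ = ((n : ℝ) + 1) ^ (-2 : ℝ) := by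
          rw [← Real.rpow_one_add' hm.le (by norm_num)]
          norm_num

lemma deriv_rzeta_bounds {u : ℝ} (hu : 4 ≤ u) :
    0 ≤ -deriv rzeta u ∧ -deriv rzeta u ≤ (2 : ℝ) ^ (-u) * (4 * (Real.pi ^ 2 / 6 - 1)) := by
  have hb : HasSum (fun n : ℕ => (2 : ℝ) ^ (-u) * (4 / ((n : ℝ) + 2) ^ 2))
      ((2 : ℝ) ^ (-u) * (4 * (Real.pi ^ 2 / 6 - 1))) := by
    simpa [div_eq_mul_inv] using (hasSum_two.mul_left 4).mul_left ((2 : ℝ) ^ (-u))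
  have h0 : ∀ n : ℕ, 0 ≤ Real.log ((n : ℝ) + 2) * ((n : ℝ) + 2) ^ (-u) := fun n => by
    have hn : (0 : ℝ) ≤ n := n.cast_nonneg
    have := Real.log_nonneg (x := (n : ℝ) + 2) (by linarith)
    positivity
  have hle : ∀ n : ℕ, Real.log ((n : ℝ) + 2) * ((n : ℝ) + 2) ^ (-u) ≤
      (2 : ℝ) ^ (-u) * (4 / ((n : ℝ) + 2) ^ 2) := fun n => by
    have hm : (0 : ℝ) < (n : ℝ) + 2 := by positivity
    calc _ ≤ ((n : ℝ) + 2) ^ 2 / 4 * ((2 : ℝ) ^ (-u) * (16 / ((n : ℝ) + 2) ^ 4)) :=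
          mul_le_mul (log_le_sq n) (rpow_neg_le hu n) (by positivity) (by positivity)
      _ = _ := by
          field_simp
          norm_num
  have hsum := hb.summable.of_nonneg_of_le h0 hle
  have e2 : ∀ n : ℕ, ((n + 1 : ℕ) : ℝ) + 1 = n + 2 := fun n => by
    push_cast
    ring
  have e : -deriv rzeta u = ∑' n : ℕ, Real.log ((n : ℝ) + 2) * ((n : ℝ) + 2) ^ (-u) := by
    rw [(hasDerivAt_rzeta (by linarith)).deriv, tsum_neg, neg_neg,
      Summable.tsum_eq_zero_add ((summable_nat_add_iff 1).mp (by simpa only [e2] using hsum))]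
    simp only [e2]
    simp
  rw [e]
  refine ⟨tsum_nonneg h0, ?_⟩
  rw [← hb.tsum_eq]
  exact hsum.tsum_le_tsum hle hb.summable

/-- For `s > 1` and integers `k` with `k ≥ s+1` and `k ≥ 3`, one has
`|α(s,k)| < 1.64 / 2^{k+s}`. -/
theorem alphaCoeff_bound (s : ℝ) (hs : 1 < s) (k : ℕ)
    (hk : s + 1 ≤ (k : ℝ)) (hk3 : 3 ≤ k) :
    |alphaCoeff s k| < 1.64 / (2 : ℝ) ^ ((k : ℝ) + s) := by
  have hk3' : (3 : ℝ) ≤ k := by exact_mod_cast hk3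
  have hk0 : (0 : ℝ) < k := by linarith
  have hu : 4 ≤ (k : ℝ) + s := by linarith
  obtain ⟨hH0, hH1⟩ := digamma_sub_bounds hs k
  obtain ⟨hZ0, hZ1⟩ := rzeta_sub_one_bounds hu
  obtain ⟨hD0, hD1⟩ := deriv_rzeta_bounds hu
  have hP : 0 < (2 : ℝ) ^ (-((k : ℝ) + s)) := by positivity
  have hpi2 : Real.pi ^ 2 < 3.15 ^ 2 := by
    gcongr
    exact Real.pi_lt_d2
  have hpi4 : Real.pi ^ 4 < 3.15 ^ 4 := by
    gcongr
    exact Real.pi_lt_d2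
  have e : 1.64 / (2 : ℝ) ^ ((k : ℝ) + s) = 1.64 * (2 : ℝ) ^ (-((k : ℝ) + s)) := by
    rw [Real.rpow_neg (by norm_num), div_eq_mul_inv]
  rw [e]
  unfold alphaCoeff
  set P := (2 : ℝ) ^ (-((k : ℝ) + s))
  set Z := rzeta ((k : ℝ) + s) - 1
  set H := digamma ((k : ℝ) + s) - digamma s
  set D := deriv rzeta ((k : ℝ) + s)
  have hZ2 : Z < 1.64 * P := by
    refine hZ1.trans_lt ?_
    rw [mul_comm]
    exact mul_lt_mul_of_pos_right (by linarith) hP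
  have hD2 : -D < 1.64 * P * k := by
    have h1 : -D < 4.92 * P := by
      refine hD1.trans_lt ?_
      rw [mul_comm]
      exact mul_lt_mul_of_pos_right (by linarith) hP
    nlinarith
  have hZH0 : 0 ≤ Z * H := mul_nonneg hZ0 hH0
  have hZH : Z * H < 1.64 * P * k :=
    (mul_le_mul_of_nonneg_left hH1 hZ0).trans_lt (mul_lt_mul_of_pos_right hZ2 hk0)
  rw [abs_div, abs_of_pos hk0, div_lt_iff₀ hk0, abs_lt]
  constructor <;> linarith
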